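/- For every integer t ≥ 2, the number of pairs (k, i) of positive integers such that 2^(2^k − 1) divides i, 2^(2^k + 1) does not divide i, and i ≤ t < i + 2^(2^k + 1), plus the number of odd positive integers i with i ≤ t < i + 4, is at most 4·(log₂(1 + log₂ t) + 1). -/

import Mathlib

/-!
Allowing `k = 0`, the rule for `(k, i)` has stride `2 ^ (2 ^ k - 1) = 1` and lifespan
`2 ^ (2 ^ k + 1) = 4`, so every odd start is also a start of scale `0`. At each scale the lifespan
is four times the stride, hence at most four starts of that scale are active. A positive start is at
least its stride, so scale `k` is inhabited at time `t` only if `2 ^ k - 1 ≤ log₂ t`. Four experts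
at each of the scales `0, …, ⌊log₂ (1 + ⌊log₂ t⌋)⌋` give the bound.
-/

theorem ncard_le_of_forall_dvd_of_lt_add_mul {s : Set ℕ} {d m t : ℕ}
    (hdvd : ∀ i ∈ s, d ∣ i) (hle : ∀ i ∈ s, i ≤ t) (hlt : ∀ i ∈ s, t < i + m * d) :
    s.ncard ≤ m := by
  have hsub : s ⊆ (Finset.Ico (t / d + 1 - m) (t / d + 1)).image (d * ·) := by
    intro i hi
    obtain ⟨c, rfl⟩ := hdvd i hi
    have hle_t := hle _ hi
    have hlt_t := hlt _ hi
    have hd : 0 < d := Nat.pos_of_mul_pos_left (show 0 < m * d by omega)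
    have hc_le : c ≤ t / d := (Nat.le_div_iff_mul_le hd).2 (by rwa [mul_comm])
    have hlt_c : t / d < c + m := (Nat.div_lt_iff_lt_mul hd).2 (by rwa [add_mul, mul_comm c])
    exact Finset.mem_coe.2 (Finset.mem_image_of_mem _ (Finset.mem_Ico.2 (by omega)))
  calc s.ncard
      ≤ ((Finset.Ico (t / d + 1 - m) (t / d + 1)).image (d * ·)).card := by
        simpa only [Set.ncard_coe_finset] using Set.ncard_le_ncard hsub (Finset.finite_toSet _)
    _ ≤ (Finset.Ico (t / d + 1 - m) (t / d + 1)).card := Finset.card_image_le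
    _ ≤ m := by rw [Nat.card_Ico]; omega

theorem ncard_fst_mem_and_snd_mem_le {ι α : Type*} (s : Finset ι) (A : ι → Set α) {m : ℕ}
    (hA : ∀ k ∈ s, (A k).ncard ≤ m) :
    {p : ι × α | p.1 ∈ s ∧ p.2 ∈ A p.1}.ncard ≤ s.card * m := by
  have hunion : {p : ι × α | p.1 ∈ s ∧ p.2 ∈ A p.1} = ⋃ k ∈ s, Prod.mk k '' A k := by
    ext ⟨k, a⟩
    simp [and_comm]
  calc {p : ι × α | p.1 ∈ s ∧ p.2 ∈ A p.1}.ncard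
      ≤ ∑ k ∈ s, (Prod.mk k '' A k).ncard := hunion ▸ s.set_ncard_biUnion_le _
    _ = ∑ k ∈ s, (A k).ncard :=
        Finset.sum_congr rfl fun k _ => Set.ncard_image_of_injective _ (Prod.mk_right_injective k)
    _ ≤ s.card * m := Finset.sum_le_card_nsmul s _ m hA

theorem natLog_one_add_natLog_le_logb {b : ℕ} (hb : 1 < b) (n : ℕ) :
    (Nat.log b (1 + Nat.log b n) : ℝ) ≤ Real.logb b (1 + Real.logb b n) := by
  calc (Nat.log b (1 + Nat.log b n) : ℝ)
      ≤ Real.logb b ((1 + Nat.log b n : ℕ) : ℝ) := Real.natLog_le_logb _ _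
    _ ≤ Real.logb b (1 + Real.logb b n) := by
        refine Real.logb_le_logb_of_le (mod_cast hb) (by positivity) ?_
        push_cast
        gcongr
        exact Real.natLog_le_logb n b

/-- The starting times of the scale-`k` experts in the active set `S_t`. The scale `k = 0`, which
the algorithm does not use, is allowed here in order to cover the odd starting times. -/
def activeStarts (k t : ℕ) : Set ℕ :=
  {i | 0 < i ∧ 2 ^ (2 ^ k - 1) ∣ i ∧ ¬ 2 ^ (2 ^ k + 1) ∣ i ∧ i ≤ t ∧ t < i + 2 ^ (2 ^ k + 1)}

theorem activeStarts_finite (k t : ℕ) : (activeStarts k t).Finite :=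
  (Set.finite_Iic t).subset fun _ ⟨_, _, _, hle, _⟩ => hle

theorem ncard_activeStarts_le_four (k t : ℕ) : (activeStarts k t).ncard ≤ 4 := by
  have hlifespan : 2 ^ (2 ^ k + 1) = 4 * 2 ^ (2 ^ k - 1) := by
    have hk : 0 < 2 ^ k := by positivity
    rw [show 2 ^ k + 1 = 2 + (2 ^ k - 1) by omega, pow_add]
    norm_num
  exact ncard_le_of_forall_dvd_of_lt_add_mul (fun _ ⟨_, hdvd, _⟩ => hdvd)
    (fun _ ⟨_, _, _, hle, _⟩ => hle) (fun _ ⟨_, _, _, _, hlt⟩ => hlifespan ▸ hlt)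

theorem le_log_one_add_log_of_mem_activeStarts {k t i : ℕ} (hi : i ∈ activeStarts k t) :
    k ≤ Nat.log 2 (1 + Nat.log 2 t) := by
  obtain ⟨hpos, hdvd, -, hle, -⟩ := hi
  have hstride : 2 ^ k - 1 ≤ Nat.log 2 t :=
    Nat.le_log_of_pow_le one_lt_two ((Nat.le_of_dvd hpos hdvd).trans hle)
  exact Nat.le_log_of_pow_le one_lt_two (by omega)

theorem ncard_pos_scale_activeStarts_le (t : ℕ) :
    {p : ℕ × ℕ | 0 < p.1 ∧ p.2 ∈ activeStarts p.1 t}.ncard ≤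
      Nat.log 2 (1 + Nat.log 2 t) * 4 := by
  have hscales : {p : ℕ × ℕ | 0 < p.1 ∧ p.2 ∈ activeStarts p.1 t} =
      {p | p.1 ∈ Finset.Icc 1 (Nat.log 2 (1 + Nat.log 2 t)) ∧ p.2 ∈ activeStarts p.1 t} := by
    ext p
    simp only [Set.mem_ofPred_eq, Finset.mem_Icc]
    exact ⟨fun ⟨hpos, hp⟩ => ⟨⟨hpos, le_log_one_add_log_of_mem_activeStarts hp⟩, hp⟩,
      fun ⟨⟨hpos, _⟩, hp⟩ => ⟨hpos, hp⟩⟩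
  simpa only [hscales, Nat.card_Icc, Nat.add_sub_cancel] using
    ncard_fst_mem_and_snd_mem_le (Finset.Icc 1 (Nat.log 2 (1 + Nat.log 2 t)))
      (activeStarts · t) fun k _ => ncard_activeStarts_le_four k t

theorem odd_starts_subset_activeStarts_zero (t : ℕ) :
    {i : ℕ | Odd i ∧ 0 < i ∧ i ≤ t ∧ t < i + 4} ⊆ activeStarts 0 t := by
  rintro i ⟨hodd, hpos, hle, hlt⟩
  have hndvd : ¬ 4 ∣ i := fun h => hodd.not_two_dvd_nat ((by norm_num : 2 ∣ 4).trans h)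
  exact ⟨hpos, one_dvd i, hndvd, hle, hlt⟩

/-- Lemma 3.3 of the paper, made quantitative: the number of active experts of
EFLH at time `t` (experts started at times `i` divisible by `2^(2^k-1)` but
not `2^(2^k+1)`, with lifespan `2^(2^k+1)`, together with odd starting times
with lifespan `4`) is at most `4 (log₂(1 + log₂ t) + 1)`. -/
theorem eflh_num_experts (t : ℕ) (ht : 2 ≤ t) :
    ((({p : ℕ × ℕ | 0 < p.1 ∧ 0 < p.2 ∧
          2 ^ (2 ^ p.1 - 1) ∣ p.2 ∧ ¬ 2 ^ (2 ^ p.1 + 1) ∣ p.2 ∧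
          p.2 ≤ t ∧ t < p.2 + 2 ^ (2 ^ p.1 + 1)}).ncard : ℝ) +
        (({i : ℕ | Odd i ∧ 0 < i ∧ i ≤ t ∧ t < i + 4}).ncard : ℝ)) ≤
      4 * (Real.logb 2 (1 + Real.logb 2 t) + 1) := by
  have hodd : {i : ℕ | Odd i ∧ 0 < i ∧ i ≤ t ∧ t < i + 4}.ncard ≤ 4 :=
    (Set.ncard_le_ncard (odd_starts_subset_activeStarts_zero t) (activeStarts_finite 0 t)).trans
      (ncard_activeStarts_le_four 0 t)
  calc _ ≤ (Nat.log 2 (1 + Nat.log 2 t) : ℝ) * 4 + 4 :=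
        add_le_add (mod_cast ncard_pos_scale_activeStarts_le t) (mod_cast hodd)
    _ = 4 * ((Nat.log 2 (1 + Nat.log 2 t) : ℝ) + 1) := by ring
    _ ≤ 4 * (Real.logb 2 (1 + Real.logb 2 t) + 1) := by
        gcongr
        exact mod_cast natLog_one_add_natLog_le_logb one_lt_two t
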